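/- Fix positive integers p and q with q ≥ 1, a matrix A ∈ ℝ^{q×p} each of whose columns has Euclidean norm 1, a vector y ∈ ℝ^q with |y_i| ≤ 1 for every i, a parameter λ ≥ 0, weights ρ ∈ ℝ^p with ρ_i > 0 for every i, and a constant α with 0 < α < 1/(2(q+p)). For μ ∈ ℝ^p with μ_i ≠ 0 for every i, define f_μ(x) = xᵀ(AᵀA + λI)x − 2yᵀAx + Σ_{i=1}^p (ρ_i/|μ_i|)·|x_i|, and let B = {x ∈ ℝ^p : |x_i| ≤ 1 for all i}. If j is an index with |μ_j| < α·ρ_j, and x* ∈ B is a minimizer of f_μ over B, then x*_j = 0. -/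

import Mathlib

open Matrix Real

/-- Lemma 1: in one ICR iteration, if the running-average weight satisfies
`|μⱼ| < α·ρⱼ` with `α < 1/(2(q+p))`, then the `j`-th coordinate of any
minimizer of `f_μ` over the unit box vanishes. -/
theorem stmt_4 (p q : ℕ) (hp : 0 < p) (hq : 1 ≤ q)
    (A : Matrix (Fin q) (Fin p) ℝ)
    (hA : ∀ j, Real.sqrt (∑ i, (A i j) ^ 2) = 1)
    (y : Fin q → ℝ) (hy : ∀ i, |y i| ≤ 1)
    (lam : ℝ) (hlam : 0 ≤ lam)
    (ρ : Fin p → ℝ) (hρ : ∀ i, 0 < ρ i)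
    (α : ℝ) (hα : 0 < α) (hα' : α < 1 / (2 * ((q : ℝ) + p)))
    (f : (Fin p → ℝ) → (Fin p → ℝ) → ℝ)
    (hf : ∀ (μ x : Fin p → ℝ), f μ x =
      x ⬝ᵥ (Aᵀ * A + lam • (1 : Matrix (Fin p) (Fin p) ℝ)).mulVec x
        - 2 * (y ⬝ᵥ A.mulVec x)
        + ∑ i, (ρ i / |μ i|) * |x i|)
    (B : Set (Fin p → ℝ)) (hB : B = {x | ∀ i, |x i| ≤ 1})
    (μ : Fin p → ℝ) (hμ : ∀ i, μ i ≠ 0)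
    (j : Fin p) (hμj : |μ j| < α * ρ j)
    (xstar : Fin p → ℝ) (hxstarB : xstar ∈ B)
    (hmin : ∀ z ∈ B, f μ xstar ≤ f μ z) :
    xstar j = 0 := by
  by_contra ht
  have hA1 : ∀ i, ∑ k, A k i ^ 2 = 1 := fun i => by
    have := hA i
    rwa [Real.sqrt_eq_one] at this
  have hquad : ∀ x : Fin p → ℝ,
      x ⬝ᵥ (Aᵀ * A + lam • (1 : Matrix (Fin p) (Fin p) ℝ)).mulVec x
        = (A *ᵥ x) ⬝ᵥ (A *ᵥ x) + lam * (x ⬝ᵥ x) := by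
    intro x
    rw [Matrix.add_mulVec, dotProduct_add, ← Matrix.mulVec_mulVec, Matrix.smul_mulVec,
      Matrix.one_mulVec, dotProduct_smul, Matrix.dotProduct_mulVec, Matrix.vecMul_transpose,
      smul_eq_mul]
  subst hB
  have hx1 : ∀ i, |xstar i| ≤ 1 := hxstarB
  obtain ⟨t, htdef⟩ : ∃ t, t = xstar j := ⟨_, rfl⟩
  obtain ⟨z, hz⟩ : ∃ z, z = Function.update xstar j 0 := ⟨_, rfl⟩
  have hzj : z j = 0 := by simp [hz]
  have hzi : ∀ i, i ≠ j → z i = xstar i := fun i hi => by simp [hz, hi]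
  have hz1 : ∀ i, |z i| ≤ 1 := by
    intro i
    by_cases hi : i = j
    · subst hi; simp [hzj]
    · rw [hzi i hi]; exact hx1 i
  have hx : xstar = z + t • Pi.single j (1 : ℝ) := by
    ext i
    by_cases hi : i = j
    · subst hi; simp [hzj, htdef]
    · simp [hi, hzi i hi]
  have hAx : A *ᵥ xstar = A *ᵥ z + t • A.col j := by
    rw [hx, Matrix.mulVec_add, Matrix.mulVec_smul, Matrix.mulVec_single_one]
  have haa : A.col j ⬝ᵥ A.col j = 1 := by
    rw [← hA1 j]; simp [dotProduct, sq]
  have hxx : xstar ⬝ᵥ xstar = z ⬝ᵥ z + t ^ 2 := by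
    rw [hx]
    simp [add_dotProduct, dotProduct_add, hzj]
    ring
  have hsum : ∑ i, (ρ i / |μ i|) * |xstar i|
      = ∑ i, (ρ i / |μ i|) * |z i| + ρ j / |μ j| * |t| := by
    rw [← Finset.add_sum_erase _ _ (Finset.mem_univ j),
      ← Finset.add_sum_erase (a := j) _ (fun i => (ρ i / |μ i|) * |z i|) (Finset.mem_univ j)]
    have : ∑ i ∈ Finset.univ.erase j, (ρ i / |μ i|) * |xstar i|
        = ∑ i ∈ Finset.univ.erase j, (ρ i / |μ i|) * |z i| :=
      Finset.sum_congr rfl fun i hi => by rw [hzi i (Finset.ne_of_mem_erase hi)]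
    rw [this, hzj, htdef]; simp; ring
  have hG : ∀ i, |∑ k, A k i * A k j| ≤ 1 := by
    intro i
    have h := Finset.sum_mul_sq_le_sq_mul_sq Finset.univ (fun k => A k i) (fun k => A k j)
    simp only [hA1, mul_one] at h
    exact (sq_le_one_iff_abs_le_one _).1 h
  have hS : |(A *ᵥ z) ⬝ᵥ A.col j| ≤ p := by
    have e : (A *ᵥ z) ⬝ᵥ A.col j = ∑ i, z i * ∑ k, A k i * A k j := by
      simp only [dotProduct, mulVec, Matrix.col_apply, Finset.sum_mul, Finset.mul_sum]
      rw [Finset.sum_comm]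
      exact Finset.sum_congr rfl fun i _ => Finset.sum_congr rfl fun k _ => by ring
    rw [e]
    refine (Finset.abs_sum_le_sum_abs _ _).trans ?_
    calc ∑ i, |z i * ∑ k, A k i * A k j| ≤ ∑ i : Fin p, (1 : ℝ) :=
          Finset.sum_le_sum fun i _ => by
            rw [abs_mul]; exact mul_le_one₀ (hz1 i) (abs_nonneg _) (hG i)
      _ = p := by simp
  have hY : |y ⬝ᵥ A.col j| ≤ q := by
    refine (Finset.abs_sum_le_sum_abs _ _).trans ?_
    calc ∑ i, |y i * A.col j i| ≤ ∑ i : Fin q, (1 : ℝ) :=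
          Finset.sum_le_sum fun i _ => by
            rw [abs_mul]
            refine mul_le_one₀ (hy i) (abs_nonneg _) ?_
            rw [← sq_le_one_iff_abs_le_one, ← hA1 j]
            exact Finset.single_le_sum (f := fun k => A k j ^ 2)
              (fun k _ => sq_nonneg _) (Finset.mem_univ i)
      _ = q := by simp
  have hc : 2 * ((q : ℝ) + p) < ρ j / |μ j| := by
    have hm : 0 < |μ j| := abs_pos.2 (hμ j)
    have hqp : 0 < 2 * ((q : ℝ) + p) := by positivity
    rw [lt_div_iff₀ hqp] at hα'
    rw [lt_div_iff₀ hm]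
    have h1 := mul_lt_mul_of_pos_left hμj hqp
    have h2 := mul_lt_mul_of_pos_right hα' (hρ j)
    linarith
  have hmz := hmin z hz1
  rw [hf, hf, hquad, hquad, hAx, hxx, hsum] at hmz
  simp only [add_dotProduct, dotProduct_add, smul_dotProduct, dotProduct_smul, smul_eq_mul,
    haa, dotProduct_comm (A.col j) (A *ᵥ z)] at hmz
  have htp : 0 < |t| := abs_pos.2 (htdef ▸ ht)
  have b1 : -(|t| * p) ≤ t * ((A *ᵥ z) ⬝ᵥ A.col j) := by
    have := neg_abs_le (t * ((A *ᵥ z) ⬝ᵥ A.col j))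
    rw [abs_mul] at this
    have := mul_le_mul_of_nonneg_left hS htp.le
    linarith
  have b2 : t * (y ⬝ᵥ A.col j) ≤ |t| * q := by
    have := le_abs_self (t * (y ⬝ᵥ A.col j))
    rw [abs_mul] at this
    have := mul_le_mul_of_nonneg_left hY htp.le
    linarith
  have b3 := mul_lt_mul_of_pos_right hc htp
  have b4 : 0 ≤ lam * t ^ 2 := by positivity
  nlinarith [sq_nonneg t]
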